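/- Let a ∈ (−1,1), y₁ ≥ 0, t > 0, and define p^{(a)}(y₁,y,t) = (2t)^{−(1+a)/2} e^{−(y₁²+y²)/(4t)} Σ_{k=0}^∞ [2^{(1−a)/2} (y₁ y/(4t))^{2k}] / [k! Γ(k + (a+1)/2)] for y > 0. Then lim_{y → 0⁺} y^a ∂_y p^{(a)}(y₁,y,t) = 0. -/

import Mathlib

/-!
For fixed `a`, `y₁`, `t` the kernel is an even, real analytic function `F` of `y` near `0`: it is a
Gaussian times an everywhere convergent power series in `(y₁y/(4t))²`, the ratio of consecutive
coefficients being `1 / ((k + 1) (k + (a + 1) / 2))`, which tends to `0`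
(`analyticAt_besselHeatKernel`). Evenness gives `F' 0 = 0`, so `F' y / y → F'' 0`, and therefore
`y ^ a * F' y = y ^ (a + 1) * (F' y / y) → 0` because `a + 1 > 0`
(`tendsto_rpow_mul_deriv_of_even`).
-/

open Filter Topology

/-- The Bessel heat kernel with Neumann condition
`p^{(a)}(y₁,y,t) = (2t)^{-(1+a)/2} e^{-(y₁²+y²)/(4t)}
  Σ_{k} 2^{(1-a)/2} (y₁y/(4t))^{2k} / (k! Γ(k+(a+1)/2))`. -/
noncomputable def besselHeatKernel (a y₁ y t : ℝ) : ℝ :=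
  (2 * t) ^ (-(1 + a) / 2) * Real.exp (-(y₁ ^ 2 + y ^ 2) / (4 * t)) *
    ∑' k : ℕ, (2 : ℝ) ^ ((1 - a) / 2) * (y₁ * y / (4 * t)) ^ (2 * k) /
      (k.factorial * Real.Gamma ((k : ℝ) + (a + 1) / 2))

/-- The entire series behind the modified Bessel function has infinite radius of convergence, so it
is analytic everywhere. -/
lemma analyticAt_besselSeries (b C : ℝ) (hb : 0 < b) (hC : 0 < C) (w₀ : ℝ) :
    AnalyticAt ℝ (fun w : ℝ => ∑' k : ℕ, C * w ^ k / (k.factorial * Real.Gamma ((k : ℝ) + b)))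
      w₀ := by
  set c : ℕ → ℝ := fun k => C / (k.factorial * Real.Gamma ((k : ℝ) + b)) with hc
  have hG : ∀ k : ℕ, 0 < Real.Gamma ((k : ℝ) + b) := fun k => Real.Gamma_pos_of_pos (by positivity)
  have hcpos : ∀ k, 0 < c k := fun k =>
    div_pos hC (mul_pos (by exact_mod_cast k.factorial_pos) (hG k))
  have hratio : ∀ k : ℕ, ‖c k.succ‖ / ‖c k‖ = 1 / (((k : ℝ) + 1) * ((k : ℝ) + b)) := by
    intro k
    rw [Real.norm_of_nonneg (hcpos _).le, Real.norm_of_nonneg (hcpos _).le]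
    have h1 : Real.Gamma (((k.succ : ℕ) : ℝ) + b) = ((k : ℝ) + b) * Real.Gamma ((k : ℝ) + b) := by
      rw [← Real.Gamma_add_one (by positivity)]
      congr 1
      push_cast
      ring
    have h2 := (hG k).ne'
    have h3 : (k : ℝ) + b ≠ 0 := by positivity
    have h4 : (k.factorial : ℝ) ≠ 0 := by positivity
    simp only [hc]
    rw [h1, Nat.factorial_succ]
    push_cast
    field_simp
  have htend : Tendsto (fun k : ℕ => ‖c k.succ‖ / ‖c k‖) atTop (𝓝 0) := by
    simp only [hratio]
    refine Tendsto.div_atTop tendsto_const_nhds (Tendsto.atTop_mul_atTop₀ ?_ ?_)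
    · exact tendsto_atTop_add_const_right _ _ tendsto_natCast_atTop_atTop
    · exact tendsto_atTop_add_const_right _ _ tendsto_natCast_atTop_atTop
  have hrad : (FormalMultilinearSeries.ofScalars ℝ c).radius = ⊤ :=
    FormalMultilinearSeries.ofScalars_radius_eq_top_of_tendsto ℝ c
      (Eventually.of_forall fun k => (hcpos k).ne') htend
  have hps := (FormalMultilinearSeries.ofScalars ℝ c).hasFPowerSeriesOnBall (by simp [hrad])
  have hsum : (FormalMultilinearSeries.ofScalars ℝ c).sum =
      fun w : ℝ => ∑' k : ℕ, C * w ^ k / (k.factorial * Real.Gamma ((k : ℝ) + b)) := by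
    funext w
    refine (FormalMultilinearSeries.ofScalars_sum_eq c w).trans (tsum_congr fun k => ?_)
    simp only [hc, smul_eq_mul]
    ring
  rw [hsum] at hps
  exact hps.analyticAt_of_mem (by simp [hrad])

lemma analyticAt_besselHeatKernel (a : ℝ) (ha : -1 < a) (y₁ t y₀ : ℝ) :
    AnalyticAt ℝ (fun y => besselHeatKernel a y₁ y t) y₀ := by
  unfold besselHeatKernel
  have hser := analyticAt_besselSeries ((a + 1) / 2) ((2 : ℝ) ^ ((1 - a) / 2)) (by linarith)
    (by positivity) ((y₁ * y₀ / (4 * t)) ^ 2)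
  have hin : AnalyticAt ℝ (fun y : ℝ => (y₁ * y / (4 * t)) ^ 2) y₀ := by
    simp only [div_eq_mul_inv]
    fun_prop
  have hexp : AnalyticAt ℝ (fun y : ℝ => Real.exp (-(y₁ ^ 2 + y ^ 2) / (4 * t))) y₀ := by
    simp only [div_eq_mul_inv]
    fun_prop
  have hcomp := AnalyticAt.fun_comp (f := fun y : ℝ => (y₁ * y / (4 * t)) ^ 2) hser hin
  simp only [pow_mul]
  exact (analyticAt_const.mul hexp).mul hcomp

lemma tendsto_rpow_mul_deriv_of_even {F : ℝ → ℝ} (hF : AnalyticAt ℝ F 0)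
    (heven : ∀ y, F (-y) = F y) {a : ℝ} (ha : -1 < a) :
    Tendsto (fun y : ℝ => y ^ a * deriv F y) (𝓝[>] (0 : ℝ)) (𝓝 0) := by
  have h0 : deriv F 0 = 0 := by
    have h := deriv_comp_neg F 0
    simp only [heven, neg_zero] at h
    linarith
  have hslope : Tendsto (fun y => y⁻¹ * deriv F y) (𝓝[>] (0 : ℝ)) (𝓝 (deriv (deriv F) 0)) := by
    have h := hF.deriv.differentiableAt.hasDerivAt.tendsto_slope_zero_right
    simpa [h0] using h
  have hpow : Tendsto (fun y : ℝ => y ^ (a + 1)) (𝓝[>] (0 : ℝ)) (𝓝 0) := by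
    have h := (Real.continuousAt_rpow_const 0 (a + 1) (Or.inr (by linarith))).tendsto
    rw [Real.zero_rpow (by linarith)] at h
    exact h.mono_left nhdsWithin_le_nhds
  have hmul := hpow.mul hslope
  rw [zero_mul] at hmul
  refine hmul.congr' ?_
  filter_upwards [self_mem_nhdsWithin] with y hy
  have hy : 0 < y := hy
  rw [Real.rpow_add_one hy.ne']
  field_simp

/-- the weighted normal derivative of the Bessel heat kernel vanishes on the
thin set: `lim_{y → 0⁺} y^a ∂_y p^{(a)}(y₁,y,t) = 0`. -/
theorem besselHeatKernel_weighted_normal_derivative_vanishes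
    (a : ℝ) (ha : a ∈ Set.Ioo (-1 : ℝ) 1) (y₁ t : ℝ) (hy₁ : 0 ≤ y₁) (ht : 0 < t) :
    Tendsto (fun y : ℝ => y ^ a * deriv (fun y' => besselHeatKernel a y₁ y' t) y)
      (𝓝[>] (0 : ℝ)) (𝓝 0) := by
  refine tendsto_rpow_mul_deriv_of_even (analyticAt_besselHeatKernel a ha.1 y₁ t 0) ?_ ha.1
  intro y
  simp only [besselHeatKernel, pow_mul, mul_neg, neg_div, neg_sq]
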